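/- arXiv:1805.03682 — 14 statements merged into one kernel-verified Lean document; each statement's English description precedes it below -/
import Mathlib

section
/- Let P = [-1,1]^2 ⊆ ℝ^2 and let G = [[4/5, 3/5], [-3/5, 4/5]] (the clockwise rotation of the plane by the angle θ = arcsin(3/5)). Then the set 𝒮 = ⋂_{k=0}^{∞} {x ∈ ℝ^2 : G^k x ∈ P} equals the closed unit disk {x ∈ ℝ^2 : x₁² + x₂² ≤ 1}. In particular, 𝒮 is not a finite intersection of closed half-spaces, even though P and G have rational entries. -/
/-!
Write `θ = arcsin (3/5)`, so that `G ^ k` is the clockwise rotation by `k θ`. The first coordinate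
of `G ^ k x` is `x₀ cos kθ + x₁ sin kθ`. By Niven's theorem `θ / π` is irrational (`sin θ = 3/5` is
rational but not one of `0, ±1/2, ±1`), so the natural multiples of `θ` are dense in the circle
(`denseRange_nsmul_theta`). By continuity, a trajectory that stays in the square therefore
satisfies `x₀ cos φ + x₁ sin φ ≤ 1` for every angle `φ`; taking `φ` to be the argument of `x` gives
`‖x‖ ≤ 1`. Conversely rotations preserve the disk, which lies in the square.

The disk is not polyhedral (`disk_ne_iInter_halfspaces`): a half-space `a ⬝ᵥ x ≤ β` containing the
disk has `‖a‖ ≤ β`, hence its boundary line can meet the disk only at `a / ‖a‖`. A point `p` of the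
unit circle avoiding these finitely many points satisfies all the inequalities with some slack, so
`s p` still satisfies them for some `s > 1`.
-/

namespace RotationDisk

open Real Filter Topology

/-- Natural multiples suffice for density because the circle is a compact group. -/
lemma denseRange_nsmul_theta :
    DenseRange (fun n : ℕ => n • ((arcsin (3 / 5) : ℝ) : Real.Angle)) := by
  have hirr : Irrational (arcsin (3 / 5) / (2 * π)) := by
    rintro ⟨q, hq⟩
    have hs : sin (arcsin (3 / 5)) = 3 / 5 := sin_arcsin (by norm_num) (by norm_num)
    have h := niven_sin (θ := arcsin (3 / 5))
      ⟨2 * q, by push_cast; rw [hq]; field_simp⟩ ⟨3 / 5, by rw [hs]; norm_num⟩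
    rw [hs] at h
    simp only [Set.mem_insert_iff, Set.mem_singleton_iff] at h
    norm_num at h
  have : Fact (0 < 2 * π) := ⟨by positivity⟩
  have hd := (denseRange_zsmul_iff_nsmul (x := ((arcsin (3 / 5) : ℝ) : AddCircle (2 * π)))).1
    (AddCircle.denseRange_zsmul_coe_iff.2 hirr)
  exact hd

lemma pow_eq (k : ℕ) :
    (!![4/5, 3/5; -3/5, 4/5] : Matrix (Fin 2) (Fin 2) ℝ) ^ k =
      !![cos (k * arcsin (3 / 5)), sin (k * arcsin (3 / 5));
        -sin (k * arcsin (3 / 5)), cos (k * arcsin (3 / 5))] := by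
  have hs : sin (arcsin (3 / 5)) = 3 / 5 := sin_arcsin (by norm_num) (by norm_num)
  have hc : cos (arcsin (3 / 5)) = 4 / 5 := by
    rw [cos_arcsin, show (1 : ℝ) - (3 / 5) ^ 2 = (4 / 5) ^ 2 by norm_num]
    exact sqrt_sq (by norm_num)
  induction k with
  | zero => simp [Matrix.one_fin_two]
  | succ k ih =>
    rw [pow_succ, ih, Matrix.mul_fin_two]
    push_cast
    rw [add_mul, one_mul, cos_add, sin_add, hs, hc]
    ext i j
    fin_cases i <;> fin_cases j <;> simp <;> ring

lemma sq_add_sq_le_one_of_forall (x y : ℝ)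
    (h : ∀ k : ℕ, x * cos (k * arcsin (3 / 5)) + y * sin (k * arcsin (3 / 5)) ≤ 1) :
    x ^ 2 + y ^ 2 ≤ 1 := by
  have hall : ∀ φ : Real.Angle, x * φ.cos + y * φ.sin ≤ 1 := by
    refine fun φ => denseRange_nsmul_theta.induction_on φ ?_ fun k => ?_
    · exact isClosed_le (by
        have := Real.Angle.continuous_cos
        have := Real.Angle.continuous_sin
        fun_prop) continuous_const
    · rw [← Real.Angle.coe_nsmul, Real.Angle.cos_coe, Real.Angle.sin_coe, nsmul_eq_mul]
      exact h k
  let z : ℂ := ⟨x, y⟩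
  have h1 := hall (z.arg : ℝ)
  rw [Real.Angle.cos_coe, Real.Angle.sin_coe] at h1
  have hx : ‖z‖ * cos z.arg = x := Complex.norm_mul_cos_arg z
  have hy : ‖z‖ * sin z.arg = y := Complex.norm_mul_sin_arg z
  have hr : ‖z‖ ≤ 1 := by
    rw [← hx, ← hy] at h1
    nlinarith [sin_sq_add_cos_sq z.arg]
  have hn : x ^ 2 + y ^ 2 = ‖z‖ ^ 2 := by
    rw [← Complex.normSq_eq_norm_sq, Complex.normSq_apply]
    ring
  rw [hn]
  exact pow_le_one₀ (norm_nonneg z) hr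

lemma disk_ne_iInter_halfspaces (N : ℕ) (a : Fin N → (Fin 2 → ℝ)) (β : Fin N → ℝ) :
    {x : Fin 2 → ℝ | x 0 ^ 2 + x 1 ^ 2 ≤ 1} ≠
      ⋂ i : Fin N, {x : Fin 2 → ℝ | a i ⬝ᵥ x ≤ β i} := by
  intro heq
  have hmem : ∀ x : Fin 2 → ℝ, x 0 ^ 2 + x 1 ^ 2 ≤ 1 ↔
      ∀ i, a i 0 * x 0 + a i 1 * x 1 ≤ β i := by
    intro x
    have := Set.ext_iff.1 heq x
    simpa [dotProduct, Fin.sum_univ_two] using this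
  let r : Fin N → ℝ := fun i => √(a i 0 ^ 2 + a i 1 ^ 2)
  have hr0 : ∀ i, 0 ≤ r i := fun i => sqrt_nonneg _
  have hr2 : ∀ i, r i ^ 2 = a i 0 ^ 2 + a i 1 ^ 2 := fun i => sq_sqrt (by positivity)
  -- The disk lies in each half-space: test the inequality at `a i / r i`.
  have hβ : ∀ i, r i ≤ β i := by
    intro i
    rcases (hr0 i).eq_or_lt with h0 | hpos
    · have := (hmem 0).1 (by simp) i
      rw [← h0]
      simpa using this
    · have h := (hmem ![a i 0 / r i, a i 1 / r i]).1 (by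
        simp only [Matrix.cons_val_zero, Matrix.cons_val_one]
        rw [div_pow, div_pow, ← add_div, ← hr2, div_self (by positivity)]) i
      simp only [Matrix.cons_val_zero, Matrix.cons_val_one] at h
      have e : a i 0 * (a i 0 / r i) + a i 1 * (a i 1 / r i) = r i := by
        field_simp
        linarith [hr2 i]
      linarith
  -- A point `(c, d)` of the circle whose abscissa differs from those of all `a i / r i`.
  obtain ⟨c, hc, hcne⟩ : ∃ c ∈ Set.Icc (-1 : ℝ) 1, c ∉ Set.range fun i => a i 0 / r i :=
    ((Set.Icc_infinite (by norm_num : (-1 : ℝ) < 1)).sdiff (Set.finite_range _)).nonempty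
  obtain ⟨d, hd⟩ : ∃ d : ℝ, c ^ 2 + d ^ 2 = 1 :=
    ⟨√(1 - c ^ 2), by rw [sq_sqrt (by nlinarith [hc.1, hc.2])]; ring⟩
  have hev : ∀ i, ∀ᶠ s in 𝓝[>] (1 : ℝ), a i 0 * (s * c) + a i 1 * (s * d) ≤ β i := by
    intro i
    rcases (hr0 i).eq_or_lt with h0 | hpos
    · have h2 := hr2 i
      rw [← h0] at h2
      have ha0 : a i 0 = 0 := by nlinarith
      have ha1 : a i 1 = 0 := by nlinarith
      refine Eventually.of_forall fun s => ?_
      have := hβ i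
      simp only [ha0, ha1]
      linarith
    · have hlt : a i 0 * (1 * c) + a i 1 * (1 * d) < β i := by
        refine lt_of_lt_of_le ?_ (hβ i)
        by_contra! hge
        -- Equality in Cauchy–Schwarz forces `a i = r i • (c, d)`.
        have hz : (a i 0 - r i * c) ^ 2 ≤ 0 := by
          nlinarith [hr2 i, sq_nonneg (a i 1 - r i * d), mul_le_mul_of_nonneg_left hge hpos.le]
        have hz' : a i 0 - r i * c = 0 := by nlinarith
        exact hcne ⟨i, by simp only; field_simp; linarith⟩
      have hcont : Continuous fun s : ℝ => a i 0 * (s * c) + a i 1 * (s * d) := by fun_prop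
      exact ((hcont.continuousAt.eventually_lt continuousAt_const hlt).filter_mono
        nhdsWithin_le_nhds).mono fun s hs => le_of_lt hs
  obtain ⟨s, hs, hs1⟩ := ((eventually_all.2 hev).and self_mem_nhdsWithin).exists
  have h := (hmem ![s * c, s * d]).2 (by simpa using hs)
  simp only [Matrix.cons_val_zero, Matrix.cons_val_one] at h
  have hs1' : 1 < s := hs1
  have hn : (s * c) ^ 2 + (s * d) ^ 2 = s ^ 2 := by linear_combination s ^ 2 * hd
  nlinarith

end RotationDisk

open Matrix

/-- With `P = [-1,1]²` and `G` the clockwise rotation by `arcsin(3/5)`,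
the set `𝒮 = ⋂_k {x : G^k x ∈ P}` equals the closed unit disk; in particular it is not a
finite intersection of closed half-spaces. -/
theorem rotation_feasible_set_is_unit_disk
    (G : Matrix (Fin 2) (Fin 2) ℝ)
    (hG : G = !![4/5, 3/5; -3/5, 4/5])
    (P : Set (Fin 2 → ℝ))
    (hP : P = {x : Fin 2 → ℝ | |x 0| ≤ 1 ∧ |x 1| ≤ 1})
    (S : Set (Fin 2 → ℝ))
    (hS : S = ⋂ k : ℕ, {x : Fin 2 → ℝ | (G ^ k).mulVec x ∈ P}) :
    S = {x : Fin 2 → ℝ | x 0 ^ 2 + x 1 ^ 2 ≤ 1} ∧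
    ¬ ∃ (N : ℕ) (a : Fin N → (Fin 2 → ℝ)) (β : Fin N → ℝ),
        S = ⋂ i : Fin N, {x : Fin 2 → ℝ | a i ⬝ᵥ x ≤ β i} := by
  have hdisk : S = {x : Fin 2 → ℝ | x 0 ^ 2 + x 1 ^ 2 ≤ 1} := by
    subst hS hP hG
    ext x
    simp only [Set.mem_iInter, Set.mem_ofPred_eq, RotationDisk.pow_eq, Matrix.mulVec,
      dotProduct, Fin.sum_univ_two, Matrix.of_apply, Matrix.cons_val_zero, Matrix.cons_val_one,
      Matrix.cons_val', Matrix.cons_val_fin_one]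
    constructor
    · intro h
      refine RotationDisk.sq_add_sq_le_one_of_forall _ _ fun k => ?_
      have := (abs_le.1 (h k).1).2
      linarith
    · intro h k
      have hcs := Real.sin_sq_add_cos_sq (k * Real.arcsin (3 / 5))
      generalize Real.sin (k * Real.arcsin (3 / 5)) = s at *
      generalize Real.cos (k * Real.arcsin (3 / 5)) = c at *
      -- The rotated vector has the same Euclidean norm as `x`.
      have hn : (c * x 0 + s * x 1) ^ 2 + (-s * x 0 + c * x 1) ^ 2 = x 0 ^ 2 + x 1 ^ 2 := by
        linear_combination (x 0 ^ 2 + x 1 ^ 2) * hcs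
      constructor <;> rw [← sq_le_one_iff_abs_le_one] <;>
        nlinarith [sq_nonneg (c * x 0 + s * x 1), sq_nonneg (-s * x 0 + c * x 1)]
  refine ⟨hdisk, ?_⟩
  rintro ⟨N, a, β, h⟩
  exact RotationDisk.disk_ne_iInter_halfspaces N a β (hdisk.symm.trans h)
end

section
/- Let A ∈ ℝ^{m×n}, b ∈ ℝ^m, G ∈ ℝ^{n×n}, 𝒮 = ⋂_{k=0}^{∞} {x ∈ ℝ^n : A G^k x ≤ b}, and for each integer r ≥ 0 let S_r = ⋂_{k=0}^{r} {x ∈ ℝ^n : A G^k x ≤ b}. If S_r = S_{r+1} for some integer r ≥ 0, then 𝒮 = S_r. -/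
/-!
If `S_r = S_{r+1}`, then `S_r` is mapped into itself by `G`: the constraints of index
`1, …, r + 1` at `x` are the constraints of index `0, …, r` at `G x`. Hence every iterate
`G ^ k x` of a point `x ∈ S_r` lies in `S_r`, and its constraint of index `0` is the
constraint of index `k` at `x`.
-/

open Matrix

/-- If the outer approximations satisfy `S_r = S_{r+1}` for some `r ≥ 0`,
then `𝒮 = S_r`. -/
theorem outer_approx_stabilizes
    (m n : ℕ) (A : Matrix (Fin m) (Fin n) ℝ) (b : Fin m → ℝ)
    (G : Matrix (Fin n) (Fin n) ℝ)
    (S : Set (Fin n → ℝ))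
    (hS : S = ⋂ k : ℕ, {x : Fin n → ℝ | A.mulVec ((G ^ k).mulVec x) ≤ b})
    (Sr : ℕ → Set (Fin n → ℝ))
    (hSr : ∀ r : ℕ, Sr r = ⋂ k ≤ r, {x : Fin n → ℝ | A.mulVec ((G ^ k).mulVec x) ≤ b})
    (r : ℕ) (h : Sr r = Sr (r + 1)) :
    S = Sr r := by
  have mem : ∀ r x, x ∈ Sr r ↔ ∀ k ≤ r, A.mulVec ((G ^ k).mulVec x) ≤ b := by
    intro r x
    simp [hSr]
  -- `S_r = S_{r+1}` makes `S_r` invariant under `G`.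
  have step : ∀ x ∈ Sr r, G.mulVec x ∈ Sr r := by
    intro x hx
    rw [h, mem] at hx
    rw [mem]
    intro k hk
    have hk' := hx (k + 1) (by omega)
    rwa [pow_succ, ← Matrix.mulVec_mulVec] at hk'
  have iter : ∀ k : ℕ, ∀ x ∈ Sr r, (G ^ k).mulVec x ∈ Sr r := by
    intro k
    induction k with
    | zero => intro x hx; simpa using hx
    | succ k ih =>
      intro x hx
      rw [pow_succ, ← Matrix.mulVec_mulVec]
      exact ih _ (step x hx)
  ext x
  rw [hS, Set.mem_iInter]
  constructor
  · intro hx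
    rw [mem]
    exact fun k _ => hx k
  · intro hx k
    -- The `k = 0` constraint of `S_r`, applied to `G ^ k x ∈ S_r`.
    simpa using (mem r _).1 (iter k x hx) 0 (Nat.zero_le r)
end

section
/- Let a > 1 be a real number, P = [-1,1]^2 ⊆ ℝ^2, and G = [[a, 0], [0, 1/a]]. For each integer r ≥ 0 let S_r = ⋂_{k=0}^{r} {x ∈ ℝ^2 : G^k x ∈ P} and let 𝒮 = ⋂_{k=0}^{∞} {x ∈ ℝ^2 : G^k x ∈ P}. Then for every integer r ≥ 0, S_r = {x ∈ ℝ^2 : |x₁| ≤ a^{-r}, |x₂| ≤ 1}, the set 𝒮 equals the segment {x ∈ ℝ^2 : x₁ = 0, |x₂| ≤ 1}, and S_{r+1} is a strict subset of S_r for every r ≥ 0 (so the outer approximations S_r do not reach 𝒮 in finitely many steps, even though P is bounded and contains the origin in its interior). -/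
/-!
The power `G ^ k` is `diag(a ^ k, a ^ (-k))`, so `G ^ k x ∈ P` says exactly that
`|x₁| ≤ a ^ (-k)` and `|x₂| ≤ a ^ k` (`diag_pow_mulVec_mem_iff`). As `a > 1`, over `k ≤ r` the first
condition is strongest at `k = r` and the second at `k = 0`, which gives `S_r`. Over all `k`, the
first condition forces `x₁ = 0` because `a ^ (-k) → 0`. The inclusion `S_{r+1} ⊆ S_r` is strict
because of the point `(a ^ (-r), 0)`.
-/

open Matrix

theorem diag_pow (a : ℝ) (k : ℕ) :
    (!![a, 0; 0, a⁻¹] : Matrix (Fin 2) (Fin 2) ℝ) ^ k = !![a ^ k, 0; 0, (a ^ k)⁻¹] := by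
  induction k with
  | zero => simp [Matrix.one_fin_two]
  | succ k ih => rw [pow_succ, ih]; simp [pow_succ, mul_comm]

theorem diag_pow_mulVec_mem_iff {a : ℝ} (ha : 1 < a) (k : ℕ) (x : Fin 2 → ℝ) :
    ((!![a, 0; 0, a⁻¹] : Matrix (Fin 2) (Fin 2) ℝ) ^ k).mulVec x ∈
        {x : Fin 2 → ℝ | |x 0| ≤ 1 ∧ |x 1| ≤ 1} ↔
      |x 0| ≤ (a ^ k)⁻¹ ∧ |x 1| ≤ a ^ k := by
  have hk : 0 < a ^ k := by positivity
  rw [diag_pow]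
  simp only [Set.mem_ofPred_eq, Matrix.mulVec, dotProduct, Fin.sum_univ_two, Matrix.of_apply,
    Matrix.cons_val_zero, Matrix.cons_val_one, zero_mul, add_zero, zero_add, abs_mul, abs_inv,
    abs_of_pos hk]
  rw [inv_mul_le_iff₀ hk, mul_one, ← one_div, le_div_iff₀' hk]

/-- For `a > 1`, `P = [-1,1]²`, and `G = [[a,0],[0,1/a]]`:
`S_r = {x : |x₁| ≤ a^{-r}, |x₂| ≤ 1}`, `𝒮` is the segment `{x : x₁ = 0, |x₂| ≤ 1}`,
and `S_{r+1} ⊂ S_r` for all `r ≥ 0`. -/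
theorem diagonal_expansion_no_finite_convergence
    (a : ℝ) (ha : 1 < a)
    (G : Matrix (Fin 2) (Fin 2) ℝ) (hG : G = !![a, 0; 0, a⁻¹])
    (P : Set (Fin 2 → ℝ)) (hP : P = {x : Fin 2 → ℝ | |x 0| ≤ 1 ∧ |x 1| ≤ 1})
    (Sr : ℕ → Set (Fin 2 → ℝ))
    (hSr : ∀ r : ℕ, Sr r = ⋂ k ≤ r, {x : Fin 2 → ℝ | (G ^ k).mulVec x ∈ P})
    (S : Set (Fin 2 → ℝ))
    (hS : S = ⋂ k : ℕ, {x : Fin 2 → ℝ | (G ^ k).mulVec x ∈ P}) :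
    (∀ r : ℕ, Sr r = {x : Fin 2 → ℝ | |x 0| ≤ (a ^ r)⁻¹ ∧ |x 1| ≤ 1}) ∧
    S = {x : Fin 2 → ℝ | x 0 = 0 ∧ |x 1| ≤ 1} ∧
    ∀ r : ℕ, Sr (r + 1) ⊂ Sr r := by
  subst hG hP hS
  have hSr' : ∀ r : ℕ, Sr r = {x : Fin 2 → ℝ | |x 0| ≤ (a ^ r)⁻¹ ∧ |x 1| ≤ 1} := by
    intro r
    ext x
    rw [hSr]
    simp only [Set.mem_iInter]
    constructor
    · intro h
      have h0 := (diag_pow_mulVec_mem_iff ha 0 x).1 (h 0 (Nat.zero_le r))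
      have hr := (diag_pow_mulVec_mem_iff ha r x).1 (h r le_rfl)
      exact ⟨hr.1, by simpa using h0.2⟩
    · rintro ⟨h0, h1⟩ k hk
      refine (diag_pow_mulVec_mem_iff ha k x).2 ⟨h0.trans ?_, h1.trans (one_le_pow₀ ha.le)⟩
      have := pow_le_pow_right₀ ha.le hk
      gcongr
  refine ⟨hSr', ?_, fun r => ?_⟩
  · ext x
    simp only [Set.mem_iInter]
    constructor
    · intro h
      have h' := fun k => (diag_pow_mulVec_mem_iff ha k x).1 (h k)
      refine ⟨?_, by simpa using (h' 0).2⟩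
      have hlim : Filter.Tendsto (fun k : ℕ => (a ^ k)⁻¹) Filter.atTop (nhds 0) :=
        (tendsto_pow_atTop_atTop_of_one_lt ha).inv_tendsto_atTop
      have := ge_of_tendsto' hlim fun k => (h' k).1
      exact abs_nonpos_iff.1 this
    · rintro ⟨h0, h1⟩ k
      refine (diag_pow_mulVec_mem_iff ha k x).2 ⟨?_, h1.trans (one_le_pow₀ ha.le)⟩
      rw [h0, abs_zero]
      positivity
  · have hlt : (a ^ (r + 1))⁻¹ < (a ^ r)⁻¹ := by
      have := pow_lt_pow_right₀ ha (Nat.lt_succ_self r)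
      gcongr
    have hpos : 0 < (a ^ r)⁻¹ := by positivity
    rw [hSr', hSr']
    refine (Set.ssubset_iff_of_subset ?_).2 ?_
    · rintro x ⟨h0, h1⟩
      exact ⟨h0.trans hlt.le, h1⟩
    refine ⟨![(a ^ r)⁻¹, 0], ⟨?_, by simp⟩, fun h => ?_⟩
    · simp [abs_of_pos (by positivity : 0 < a)]
    · have h0 : |(a ^ r)⁻¹| ≤ (a ^ (r + 1))⁻¹ := h.1
      rw [abs_of_pos hpos] at h0
      exact absurd h0 (not_le.2 hlt)
end

section
/- Let P = [0,1]^2 ⊆ ℝ^2 and let G = (1/2)·[[2/3, -1/3], [-1/3, 2/3]]. For each integer r ≥ 0 let S_r = ⋂_{k=0}^{r} {x ∈ ℝ^2 : G^k x ∈ P} and let 𝒮 = ⋂_{k=0}^{∞} {x ∈ ℝ^2 : G^k x ∈ P}. Then: (a) for every integer k ≥ 1, G^k = (1/2^{k+1})·([[1, -1], [-1, 1]] + (1/3^k)·[[1, 1], [1, 1]]); (b) for every integer r ≥ 1, S_r = P ∩ {x ∈ ℝ^2 : |x₁ - x₂| ≤ (1/3^r)(x₁ + x₂)}; (c) S_{r+1}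 is a strict subset of S_r for every r ≥ 1; and (d) 𝒮 = {x ∈ ℝ^2 : 0 ≤ x₁ ≤ 1, x₂ = x₁}. (Here the spectral radius of G is 1/2 and P is bounded, but the origin is on the boundary of P and convergence of S_r to 𝒮 is not finite.) -/
open Matrix

/-!
`G` is symmetric with eigenvectors `(1, -1)` and `(1, 1)` for the eigenvalues `1/2` and `1/6`, which
gives the formula for `G ^ k`: the coordinates of `G ^ k x` are `(±d + s / 3 ^ k) / 2 ^ (k + 1)` with
`d = x 0 - x 1` and `s = x 0 + x 1`. For `x` in the unit square the upper bounds `≤ 1` then hold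
automatically, and nonnegativity says `|d| ≤ s / 3 ^ k` (`mulVec_pow_mem_iff`). These conditions
tighten with `k`, so only `k = r` matters in `S_r`. The point `((1 + t) / 2, (1 - t) / 2)` with
`t = 1 / 3 ^ r` has `d = t` and `s = 1`, so it lies in `S_r` but not in `S_{r+1}`, and letting `k → ∞`
leaves only the diagonal `d = 0`.
-/

/-- Valid for `k = 0` as well. -/
theorem G_pow (k : ℕ) :
    ((1/2 : ℝ) • !![2/3, -1/3; -1/3, 2/3] : Matrix (Fin 2) (Fin 2) ℝ) ^ k =
      (1 / 2 ^ (k + 1) : ℝ) • (!![1, -1; -1, 1] + (1 / 3 ^ k : ℝ) • !![1, 1; 1, 1]) := by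
  induction k with
  | zero =>
    ext i j
    fin_cases i <;> fin_cases j <;> norm_num
  | succ k ih =>
    rw [pow_succ, ih]
    ext i j
    fin_cases i <;> fin_cases j <;>
      simp [Matrix.mul_apply, Fin.sum_univ_two] <;> field_simp <;> ring

theorem mulVec_pow_mem_iff (k : ℕ) (x : Fin 2 → ℝ)
    (hx : 0 ≤ x 0 ∧ x 0 ≤ 1 ∧ 0 ≤ x 1 ∧ x 1 ≤ 1) :
    ((((1/2 : ℝ) • !![2/3, -1/3; -1/3, 2/3] : Matrix (Fin 2) (Fin 2) ℝ) ^ k).mulVec x ∈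
      {x : Fin 2 → ℝ | 0 ≤ x 0 ∧ x 0 ≤ 1 ∧ 0 ≤ x 1 ∧ x 1 ≤ 1}) ↔
      |x 0 - x 1| ≤ (1 / 3 ^ k : ℝ) * (x 0 + x 1) := by
  obtain ⟨h0, h0', h1, h1'⟩ := hx
  rw [G_pow]
  have hc : (0 : ℝ) < 1 / 2 ^ (k + 1) := by positivity
  have hc' : (1 : ℝ) / 2 ^ (k + 1) ≤ 1 / 2 := by
    apply one_div_le_one_div_of_le (by norm_num)
    have : (1 : ℝ) ≤ 2 ^ k := one_le_pow₀ (by norm_num)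
    rw [pow_succ]; linarith
  have ht' : (1 : ℝ) / 3 ^ k ≤ 1 := by
    rw [div_le_one (by positivity)]
    exact one_le_pow₀ (by norm_num)
  generalize (1 : ℝ) / 2 ^ (k + 1) = c at *
  generalize (1 : ℝ) / 3 ^ k = t at *
  have e0 : ((c • (!![1, -1; -1, 1] + t • !![1, 1; 1, 1]) : Matrix (Fin 2) (Fin 2) ℝ).mulVec x) 0
      = c * ((x 0 - x 1) + t * (x 0 + x 1)) := by
    simp [Matrix.mulVec, dotProduct, Fin.sum_univ_two]; ring
  have e1 : ((c • (!![1, -1; -1, 1] + t • !![1, 1; 1, 1]) : Matrix (Fin 2) (Fin 2) ℝ).mulVec x) 1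
      = c * (-(x 0 - x 1) + t * (x 0 + x 1)) := by
    simp [Matrix.mulVec, dotProduct, Fin.sum_univ_two]; ring
  rw [Set.mem_ofPred_eq, e0, e1, mul_nonneg_iff_of_pos_left hc, mul_nonneg_iff_of_pos_left hc, abs_le]
  have hs : t * (x 0 + x 1) ≤ x 0 + x 1 := mul_le_of_le_one_left (by linarith) ht'
  constructor
  · rintro ⟨a, -, b, -⟩
    constructor <;> linarith
  · rintro ⟨a, b⟩
    refine ⟨by linarith, ?_, by linarith, ?_⟩ <;> nlinarith

theorem mem_Sr_iff (r : ℕ) (x : Fin 2 → ℝ) :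
    (∀ k ≤ r, (((1/2 : ℝ) • !![2/3, -1/3; -1/3, 2/3] : Matrix (Fin 2) (Fin 2) ℝ) ^ k).mulVec x ∈
      {x : Fin 2 → ℝ | 0 ≤ x 0 ∧ x 0 ≤ 1 ∧ 0 ≤ x 1 ∧ x 1 ≤ 1}) ↔
      (0 ≤ x 0 ∧ x 0 ≤ 1 ∧ 0 ≤ x 1 ∧ x 1 ≤ 1) ∧
        |x 0 - x 1| ≤ (1 / 3 ^ r : ℝ) * (x 0 + x 1) := by
  constructor
  · intro h
    have hx : 0 ≤ x 0 ∧ x 0 ≤ 1 ∧ 0 ≤ x 1 ∧ x 1 ≤ 1 := by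
      have h0 := h 0 (Nat.zero_le r)
      rwa [pow_zero, Matrix.one_mulVec] at h0
    exact ⟨hx, (mulVec_pow_mem_iff r x hx).1 (h r le_rfl)⟩
  · rintro ⟨hx, h⟩ k hk
    refine (mulVec_pow_mem_iff k x hx).2 (h.trans ?_)
    refine mul_le_mul_of_nonneg_right ?_ (by linarith [hx.1, hx.2.2.1])
    exact one_div_le_one_div_of_le (by positivity) (pow_le_pow_right₀ (by norm_num) hk)

/-- For `P = [0,1]²` and `G = (1/2)·[[2/3,-1/3],[-1/3,2/3]]`:
(a) the explicit formula for `G^k` for `k ≥ 1`;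
(b) `S_r = P ∩ {x : |x₁ - x₂| ≤ (1/3^r)(x₁+x₂)}` for `r ≥ 1`;
(c) `S_{r+1} ⊂ S_r` for all `r ≥ 1`;
(d) `𝒮 = {x : 0 ≤ x₁ ≤ 1, x₂ = x₁}`. -/
theorem origin_on_boundary_no_finite_convergence
    (G : Matrix (Fin 2) (Fin 2) ℝ)
    (hG : G = (1/2 : ℝ) • !![2/3, -1/3; -1/3, 2/3])
    (P : Set (Fin 2 → ℝ))
    (hP : P = {x : Fin 2 → ℝ | 0 ≤ x 0 ∧ x 0 ≤ 1 ∧ 0 ≤ x 1 ∧ x 1 ≤ 1})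
    (Sr : ℕ → Set (Fin 2 → ℝ))
    (hSr : ∀ r : ℕ, Sr r = ⋂ k ≤ r, {x : Fin 2 → ℝ | (G ^ k).mulVec x ∈ P})
    (S : Set (Fin 2 → ℝ))
    (hS : S = ⋂ k : ℕ, {x : Fin 2 → ℝ | (G ^ k).mulVec x ∈ P}) :
    (∀ k : ℕ, 1 ≤ k →
      G ^ k = (1 / 2 ^ (k + 1) : ℝ) •
        (!![1, -1; -1, 1] + (1 / 3 ^ k : ℝ) • !![1, 1; 1, 1])) ∧
    (∀ r : ℕ, 1 ≤ r →
      Sr r = P ∩ {x : Fin 2 → ℝ | |x 0 - x 1| ≤ (1 / 3 ^ r : ℝ) * (x 0 + x 1)}) ∧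
    (∀ r : ℕ, 1 ≤ r → Sr (r + 1) ⊂ Sr r) ∧
    S = {x : Fin 2 → ℝ | 0 ≤ x 0 ∧ x 0 ≤ 1 ∧ x 1 = x 0} := by
  subst hG hP hS
  have hmem : ∀ r x, x ∈ Sr r ↔ (0 ≤ x 0 ∧ x 0 ≤ 1 ∧ 0 ≤ x 1 ∧ x 1 ≤ 1) ∧
      |x 0 - x 1| ≤ (1 / 3 ^ r : ℝ) * (x 0 + x 1) := by
    intro r x
    rw [hSr, ← mem_Sr_iff]
    simp only [Set.mem_iInter]
    rfl
  refine ⟨fun k _ => G_pow k, fun r _ => Set.ext fun x => hmem r x, fun r _ => ?_, ?_⟩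
  · rw [Set.ssubset_iff_of_subset]
    · have ht : (0 : ℝ) < 1 / 3 ^ r := by positivity
      have ht' : (1 : ℝ) / 3 ^ r ≤ 1 := by
        rw [div_le_one (by positivity)]
        exact one_le_pow₀ (by norm_num)
      have hsucc : (1 : ℝ) / 3 ^ (r + 1) = 1 / 3 ^ r / 3 := by
        rw [pow_succ]; field_simp
      refine ⟨![(1 + 1 / 3 ^ r) / 2, (1 - 1 / 3 ^ r) / 2], ?_, ?_⟩
      · rw [hmem]
        generalize (1 : ℝ) / 3 ^ r = t at *
        simp only [Matrix.cons_val_zero, Matrix.cons_val_one]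
        refine ⟨⟨by linarith, by linarith, by linarith, by linarith⟩, ?_⟩
        rw [abs_le]
        constructor <;> linarith
      · rw [hmem, hsucc]
        generalize (1 : ℝ) / 3 ^ r = t at *
        simp only [Matrix.cons_val_zero, Matrix.cons_val_one]
        rintro ⟨-, h⟩
        have := (abs_le.1 h).2
        linarith
    · intro x hx
      rw [hSr] at hx ⊢
      simp only [Set.mem_iInter] at hx ⊢
      exact fun k hk => hx k (hk.trans (Nat.le_succ r))
  · have hS : ∀ x, (x ∈ ⋂ k : ℕ, {x : Fin 2 → ℝ |
        (((1/2 : ℝ) • !![2/3, -1/3; -1/3, 2/3] : Matrix (Fin 2) (Fin 2) ℝ) ^ k).mulVec x ∈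
          {x : Fin 2 → ℝ | 0 ≤ x 0 ∧ x 0 ≤ 1 ∧ 0 ≤ x 1 ∧ x 1 ≤ 1}}) ↔ ∀ r, x ∈ Sr r := by
      intro x
      simp only [hSr, Set.mem_iInter]
      exact ⟨fun h r k _ => h k, fun h k => h k k le_rfl⟩
    ext x
    rw [hS]
    simp only [hmem, Set.mem_ofPred_eq]
    constructor
    · intro h
      obtain ⟨⟨h0, h0', h1, h1'⟩, -⟩ := h 0
      refine ⟨h0, h0', ?_⟩
      by_contra hne
      have hpos : 0 < |x 0 - x 1| := abs_pos.2 (sub_ne_zero.2 (Ne.symm hne))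
      obtain ⟨k, hk⟩ := exists_pow_lt_of_lt_one (half_pos hpos) (by norm_num : (1 / 3 : ℝ) < 1)
      have hk' := (h k).2
      rw [_root_.one_div_pow] at hk
      have ht : (0 : ℝ) < 1 / 3 ^ k := by positivity
      nlinarith
    · rintro ⟨h0, h0', h1⟩ r
      rw [h1, sub_self, abs_zero]
      exact ⟨⟨h0, h0', h0, h0'⟩, by positivity⟩
end

section
/- Let P = {x ∈ ℝ^2 : x₁ ≥ -1} and let G = (1/2)·[[2/3, -1/3], [-1/3, 2/3]]. For each integer r ≥ 0 let S_r = ⋂_{k=0}^{r} {x ∈ ℝ^2 : G^k x ∈ P}. Then for every integer r ≥ 1, S_{r+1} is a strict subset of S_r. (Here the spectral radius of G is 1/2 and the origin is in the interior of P, but P is unbounded and the outer approximations S_r do not reach ⋂_{k=0}^{∞} {x : G^k x ∈ P} in finitely many steps.) -/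
open Matrix

/-!
`G` has eigenvectors `(1,1)` and `(1,-1)` with eigenvalues `1/6` and `1/2`, so the first
coordinate of `G^k (a(1,1) + b(1,-1))` is `a/6^k + b/2^k` (`pow_mulVec_eigen`).
For `a = 4·6^r`, `b = -5·2^r` this equals `4·6^d - 5·2^d ≥ -1` with `d = r - k` when `k ≤ r`
(`five_mul_two_pow_le`), but equals `-11/6 < -1` when `k = r + 1`. The resulting vector thus lies
in `S_r` and not in `S_{r+1}`.
-/

lemma pow_mulVec_eigen (a b : ℝ) (k : ℕ) :
    (((1/2 : ℝ) • !![2/3, -1/3; -1/3, 2/3] : Matrix (Fin 2) (Fin 2) ℝ) ^ k).mulVec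
      ![a + b, a - b] = ![a / 6 ^ k + b / 2 ^ k, a / 6 ^ k - b / 2 ^ k] := by
  induction k with
  | zero => simp
  | succ k ih =>
    rw [pow_succ', ← Matrix.mulVec_mulVec, ih]
    ext i
    fin_cases i
    all_goals
      simp [Matrix.mulVec, dotProduct, Fin.sum_univ_two, pow_succ]
      field_simp
      ring

lemma five_mul_two_pow_le (d : ℕ) : 5 * (2 : ℝ) ^ d ≤ 4 * 6 ^ d + 1 := by
  induction d with
  | zero => norm_num
  | succ d ih =>
    have h : (1 : ℝ) ≤ 6 ^ d := one_le_pow₀ (by norm_num)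
    rw [pow_succ, pow_succ]
    linarith

/-- For the unbounded polyhedron `P = {x : x₁ ≥ -1}` and
`G = (1/2)·[[2/3,-1/3],[-1/3,2/3]]`, the outer approximations satisfy
`S_{r+1} ⊂ S_r` for every `r ≥ 1`. -/
theorem unbounded_polyhedron_no_finite_convergence
    (G : Matrix (Fin 2) (Fin 2) ℝ)
    (hG : G = (1/2 : ℝ) • !![2/3, -1/3; -1/3, 2/3])
    (P : Set (Fin 2 → ℝ))
    (hP : P = {x : Fin 2 → ℝ | -1 ≤ x 0})
    (Sr : ℕ → Set (Fin 2 → ℝ))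
    (hSr : ∀ r : ℕ, Sr r = ⋂ k ≤ r, {x : Fin 2 → ℝ | (G ^ k).mulVec x ∈ P}) :
    ∀ r : ℕ, 1 ≤ r → Sr (r + 1) ⊂ Sr r := by
  intro r _
  have mem : ∀ (s : ℕ) (x : Fin 2 → ℝ), x ∈ Sr s ↔ ∀ k ≤ s, -1 ≤ (G ^ k).mulVec x 0 := by
    intro s x
    rw [hSr, hP]
    simp only [Set.mem_iInter, Set.mem_setOf_eq]
  have coord : ∀ (a b : ℝ) (k : ℕ),
      (G ^ k).mulVec ![a + b, a - b] 0 = a / 6 ^ k + b / 2 ^ k := by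
    intro a b k
    rw [hG, pow_mulVec_eigen]
    rfl
  rw [Set.ssubset_iff_of_subset]
  · refine ⟨![4 * 6 ^ r + -(5 * 2 ^ r), 4 * 6 ^ r - -(5 * 2 ^ r)], ?_, ?_⟩
    · rw [mem]
      intro k hk
      obtain ⟨d, rfl⟩ := Nat.exists_eq_add_of_le hk
      have h6 : 4 * (6 : ℝ) ^ (k + d) / 6 ^ k = 4 * 6 ^ d := by
        rw [pow_add]; field_simp
      have h2 : -(5 * (2 : ℝ) ^ (k + d)) / 2 ^ k = -(5 * 2 ^ d) := by
        rw [pow_add]; field_simp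
      rw [coord, h6, h2]
      linarith [five_mul_two_pow_le d]
    · rw [mem]
      intro h
      have h := h (r + 1) le_rfl
      have h6 : 4 * (6 : ℝ) ^ r / 6 ^ (r + 1) = 4 / 6 := by
        rw [pow_succ]; field_simp
      have h2 : -(5 * (2 : ℝ) ^ r) / 2 ^ (r + 1) = -(5 / 2) := by
        rw [pow_succ]; field_simp
      rw [coord, h6, h2] at h
      norm_num at h
  · intro x hx
    rw [mem] at hx ⊢
    exact fun k hk => hx k (hk.trans (Nat.le_succ r))
end

section
/- Let A ∈ ℝ^{m×n}, b ∈ ℝ^m, G ∈ ℝ^{n×n}, P = {x ∈ ℝ^n : Ax ≤ b}, S_r = ⋂_{k=0}^{r} {x ∈ ℝ^n : A G^k x ≤ b} for each integer r ≥ 0, and 𝒮 = ⋂_{k=0}^{∞} {x ∈ ℝ^n : A G^k x ≤ b}. If every complex eigenvalue μ of G satisfies |μ| < 1 (i.e., the spectral radius of G is less than 1), P is bounded, and the origin lies in the interior of P, then there exists a nonnegative integer r such that 𝒮 = S_r. -/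
/-!
Since `0` is interior to `P` and `P` is bounded, `ball 0 ε ⊆ P ⊆ closedBall 0 R` for some `ε > 0`
and `R`. Gelfand's formula turns the eigenvalue bound into `‖G ^ k‖ → 0`
(`eventually_norm_pow_lt`), so from some index `N` on, `G ^ k` maps all of `P` into `ball 0 ε ⊆ P`.
As every point of `S_N` lies in `P`, the constraints with `k ≥ N` are implied by those
defining `S_N`, whence `𝒮 = S_N`.
-/

open Matrix

section PowersTendToZero

attribute [local instance] Matrix.linftyOpNormedRing Matrix.linftyOpNormedAlgebra

/-- In a complex Banach algebra, powers of an element whose spectrum lies in the open unit disc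
become arbitrarily small, by Gelfand's formula: choosing `c` strictly between the spectral radius
and `1`, eventually `‖a ^ k‖ ≤ c ^ k`. -/
lemma eventually_norm_pow_lt {B : Type*} [NormedRing B] [NormedAlgebra ℂ B] [CompleteSpace B]
    (a : B) (ha : ∀ μ ∈ spectrum ℂ a, ‖μ‖ < 1) (δ : ℝ) (hδ : 0 < δ) :
    ∀ᶠ k : ℕ in Filter.atTop, ‖a ^ k‖ < δ := by
  rcases subsingleton_or_nontrivial B with hB | hB
  · refine Filter.Eventually.of_forall fun k => ?_
    rw [Subsingleton.elim (a ^ k) 0, norm_zero]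
    exact hδ
  have h1 : spectralRadius ℂ a < ((1 : NNReal) : ENNReal) :=
    spectrum.spectralRadius_lt_of_forall_lt a fun μ hμ => by
      exact_mod_cast ha μ hμ
  obtain ⟨c, hc, hc1⟩ := ENNReal.lt_iff_exists_nnreal_btwn.mp h1
  have hc1' : c < 1 := by exact_mod_cast hc1
  have hsmall : ∀ᶠ k : ℕ in Filter.atTop, (c : ℝ) ^ k < δ :=
    (tendsto_pow_atTop_nhds_zero_of_lt_one c.2 (by exact_mod_cast hc1')).eventually_lt_const hδ
  filter_upwards [(spectrum.pow_nnnorm_pow_one_div_tendsto_nhds_spectralRadius a).eventually_lt_const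
    hc, hsmall, Filter.eventually_gt_atTop 0] with k hk hck hk0
  have hk' : (‖a ^ k‖₊ : ENNReal) ≤ (c : ENNReal) ^ k := by
    rw [← ENNReal.rpow_natCast, ← ENNReal.rpow_inv_le_iff (by exact_mod_cast hk0), ← one_div]
    exact hk.le
  have hk'' : ‖a ^ k‖₊ ≤ c ^ k := by exact_mod_cast hk'
  exact lt_of_le_of_lt (by exact_mod_cast hk'') hck

/-- The `ℓ^∞` operator norm is unchanged by the inclusion `ℝ ⊆ ℂ`, so the decay of the powers of
the complexified matrix gives uniform smallness of `G ^ k` on bounded sets of real vectors. -/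
lemma exists_forall_norm_pow_mulVec_lt {n : ℕ} (G : Matrix (Fin n) (Fin n) ℝ)
    (hspec : ∀ μ ∈ spectrum ℂ (G.map Complex.ofReal), ‖μ‖ < 1) (R ε : ℝ) (hε : 0 < ε) :
    ∃ N : ℕ, ∀ k ≥ N, ∀ x : Fin n → ℝ, ‖x‖ ≤ R → ‖(G ^ k) *ᵥ x‖ < ε := by
  have : CompleteSpace (Matrix (Fin n) (Fin n) ℂ) := FiniteDimensional.complete ℂ _
  -- `|R| + 1` rather than `R` keeps the denominator positive.
  have hR : 0 < |R| + 1 := by positivity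
  obtain ⟨N, hN⟩ := Filter.eventually_atTop.mp
    (eventually_norm_pow_lt (G.map Complex.ofReal) hspec (ε / (|R| + 1)) (by positivity))
  refine ⟨N, fun k hk x hx => ?_⟩
  have hmap : (G.map Complex.ofReal) ^ k = (G ^ k).map Complex.ofReal :=
    (Matrix.map_pow G Complex.ofRealHom k).symm
  have hnorm : ‖(G ^ k).map Complex.ofReal‖ = ‖G ^ k‖ := by
    simp [Matrix.linfty_opNorm_def]
  have hlt := hN k hk
  rw [hmap, hnorm, lt_div_iff₀ hR] at hlt
  calc ‖(G ^ k) *ᵥ x‖ ≤ ‖G ^ k‖ * ‖x‖ := Matrix.linfty_opNorm_mulVec _ _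
    _ ≤ ‖G ^ k‖ * (|R| + 1) := by
        gcongr
        linarith [le_abs_self R]
    _ < ε := hlt

end PowersTendToZero


/-- If the spectral radius of `G` is less than `1` (every complex
eigenvalue has modulus `< 1`), `P = {x : Ax ≤ b}` is bounded, and the origin lies in the
interior of `P`, then `𝒮 = S_r` for some nonnegative integer `r`. -/
theorem finite_convergence_of_outer_approximations
    (m n : ℕ) (A : Matrix (Fin m) (Fin n) ℝ) (b : Fin m → ℝ)
    (G : Matrix (Fin n) (Fin n) ℝ)
    (P : Set (Fin n → ℝ)) (hP : P = {x : Fin n → ℝ | A.mulVec x ≤ b})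
    (Sr : ℕ → Set (Fin n → ℝ))
    (hSr : ∀ r : ℕ, Sr r = ⋂ k ≤ r, {x : Fin n → ℝ | A.mulVec ((G ^ k).mulVec x) ≤ b})
    (S : Set (Fin n → ℝ))
    (hS : S = ⋂ k : ℕ, {x : Fin n → ℝ | A.mulVec ((G ^ k).mulVec x) ≤ b})
    (hspec : ∀ μ ∈ spectrum ℂ (G.map Complex.ofReal), ‖μ‖ < 1)
    (hbdd : Bornology.IsBounded P)
    (h0 : (0 : Fin n → ℝ) ∈ interior P) :
    ∃ r : ℕ, S = Sr r := by
  subst hP hS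
  obtain ⟨ε, hε, hball⟩ := Metric.mem_nhds_iff.mp (mem_interior_iff_mem_nhds.mp h0)
  obtain ⟨R, hR⟩ := hbdd.exists_norm_le
  obtain ⟨N, hN⟩ := exists_forall_norm_pow_mulVec_lt G hspec R ε hε
  refine ⟨N, ?_⟩
  rw [hSr]
  ext x
  simp only [Set.mem_iInter, Set.mem_setOf_eq]
  refine ⟨fun h k _ => h k, fun h k => ?_⟩
  rcases le_total k N with hk | hk
  · exact h k hk
  · have hx : A *ᵥ x ≤ b := by simpa using h 0 (Nat.zero_le N)
    exact hball (mem_ball_zero_iff.mpr (hN k hk x (hR x hx)))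
end

section
/- Let A ∈ ℝ^{m×n}, b ∈ ℝ^m, G ∈ ℝ^{n×n}, P = {x ∈ ℝ^n : Ax ≤ b}, S_r = ⋂_{k=0}^{r} {x ∈ ℝ^n : A G^k x ≤ b}, and 𝒮 = ⋂_{k=0}^{∞} {x ∈ ℝ^n : A G^k x ≤ b}. Suppose M ∈ ℝ^{n×n} is a symmetric positive definite matrix and γ ∈ (0,1) is a scalar such that γM - GᵀMG is positive semidefinite, and suppose 0 < α₁ ≤ α₂ are scalars such that {x ∈ ℝ^n : xᵀMx ≤ α₁} ⊆ P ⊆ {x ∈ ℝ^n : xᵀMx ≤ α₂}. Then for every integer r ≥ 0 with γ^r·α₂ ≤ α₁, one has 𝒮 = S_r. -/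
open Matrix

/-!
The quadratic form `V x = xᵀMx` is a Lyapunov function: `GᵀMG ⪯ γM` says `V (G x) ≤ γ V x`, so
`V (G^k x) ≤ γ^k V x`. A point of `S_r` lies in `P`, hence `V x ≤ α₂`, and for `k ≥ r` this gives
`V (G^k x) ≤ γ^k α₂ ≤ γ^r α₂ ≤ α₁`. Thus `G^k x` lies in the inner ellipsoid, hence in `P`, and
the constraints with index `k > r` are implied by `x ∈ P` alone.
-/

lemma quadForm_mulVec_le {n : ℕ} {G M : Matrix (Fin n) (Fin n) ℝ} {γ : ℝ}
    (h : (γ • M - Gᵀ * M * G).PosSemidef) (x : Fin n → ℝ) :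
    (G *ᵥ x) ⬝ᵥ M *ᵥ (G *ᵥ x) ≤ γ * (x ⬝ᵥ M *ᵥ x) := by
  have h1 := h.dotProduct_mulVec_nonneg x
  have h2 : x ⬝ᵥ (Gᵀ * M * G) *ᵥ x = (G *ᵥ x) ⬝ᵥ M *ᵥ (G *ᵥ x) := by
    rw [← mulVec_mulVec, ← mulVec_mulVec, dotProduct_mulVec, vecMul_transpose]
  rw [star_trivial, sub_mulVec, dotProduct_sub, smul_mulVec, dotProduct_smul, smul_eq_mul, h2] at h1
  linarith

lemma quadForm_pow_mulVec_le {n : ℕ} {G M : Matrix (Fin n) (Fin n) ℝ} {γ : ℝ} (hγ : 0 ≤ γ)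
    (h : (γ • M - Gᵀ * M * G).PosSemidef) (x : Fin n → ℝ) (k : ℕ) :
    (G ^ k *ᵥ x) ⬝ᵥ M *ᵥ (G ^ k *ᵥ x) ≤ γ ^ k * (x ⬝ᵥ M *ᵥ x) := by
  induction k with
  | zero => simp
  | succ k ih =>
    rw [pow_succ', ← mulVec_mulVec, pow_succ', mul_assoc]
    exact (quadForm_mulVec_le h _).trans (mul_le_mul_of_nonneg_left ih hγ)

/-- If `M ≻ 0` is symmetric, `γ ∈ (0,1)` satisfies `GᵀMG ⪯ γM`, and
`0 < α₁ ≤ α₂` are such that `{xᵀMx ≤ α₁} ⊆ P ⊆ {xᵀMx ≤ α₂}`, then for every `r ≥ 0` with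
`γ^r·α₂ ≤ α₁` one has `𝒮 = S_r`. -/
theorem shrinking_ellipsoids_give_finite_convergence
    (m n : ℕ) (A : Matrix (Fin m) (Fin n) ℝ) (b : Fin m → ℝ)
    (G : Matrix (Fin n) (Fin n) ℝ)
    (P : Set (Fin n → ℝ)) (hP : P = {x : Fin n → ℝ | A.mulVec x ≤ b})
    (Sr : ℕ → Set (Fin n → ℝ))
    (hSr : ∀ r : ℕ, Sr r = ⋂ k ≤ r, {x : Fin n → ℝ | A.mulVec ((G ^ k).mulVec x) ≤ b})
    (S : Set (Fin n → ℝ))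
    (hS : S = ⋂ k : ℕ, {x : Fin n → ℝ | A.mulVec ((G ^ k).mulVec x) ≤ b})
    (M : Matrix (Fin n) (Fin n) ℝ) (hMsymm : M.IsHermitian) (hM : M.PosDef)
    (γ : ℝ) (hγ0 : 0 < γ) (hγ1 : γ < 1)
    (hshrink : (γ • M - Gᵀ * M * G).PosSemidef)
    (α₁ α₂ : ℝ) (hα₁ : 0 < α₁) (hα₁₂ : α₁ ≤ α₂)
    (hinner : {x : Fin n → ℝ | x ⬝ᵥ M.mulVec x ≤ α₁} ⊆ P)
    (houter : P ⊆ {x : Fin n → ℝ | x ⬝ᵥ M.mulVec x ≤ α₂})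
    (r : ℕ) (hr : γ ^ r * α₂ ≤ α₁) :
    S = Sr r := by
  subst hP hS
  rw [hSr]
  apply Set.Subset.antisymm
  · exact fun x hx => Set.mem_iInter₂.2 fun k _ => Set.mem_iInter.1 hx k
  · intro x hx
    rw [Set.mem_iInter₂] at hx
    refine Set.mem_iInter.2 fun k => ?_
    rcases le_total k r with hk | hk
    · exact hx k hk
    · have hxP : x ⬝ᵥ M *ᵥ x ≤ α₂ := houter (by simpa using hx 0 (Nat.zero_le r))
      apply hinner
      calc (G ^ k *ᵥ x) ⬝ᵥ M *ᵥ (G ^ k *ᵥ x)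
          ≤ γ ^ k * (x ⬝ᵥ M *ᵥ x) := quadForm_pow_mulVec_le hγ0.le hshrink x k
        _ ≤ γ ^ k * α₂ := mul_le_mul_of_nonneg_left hxP (pow_nonneg hγ0.le k)
        _ ≤ γ ^ r * α₂ := mul_le_mul_of_nonneg_right
            (pow_le_pow_of_le_one hγ0.le hγ1.le hk) (hα₁.le.trans hα₁₂)
        _ ≤ α₁ := hr
end

section
/- Let G ∈ ℝ^{n×n} be such that for every y ∈ ℝ^n the sequence G^k y converges to 0 as k → ∞ (which holds whenever the spectral radius of G is less than 1). If M ∈ ℝ^{n×n} is a symmetric matrix satisfying the discrete Lyapunov equation GᵀMG - M = -I, then M is positive definite. -/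
/-!
The quadratic form `V y = yᵀ M y` is a strict Lyapunov function for `y ↦ G y`: the equation gives
`V (G y) = V y - yᵀ y`. Along an orbit `G ^ k y` it is therefore antitone, and by continuity it
tends to `V 0 = 0`, so `V ≥ 0` everywhere. Hence `V y = V (G y) + yᵀ y ≥ yᵀ y > 0` for `y ≠ 0`.
-/

open Matrix

theorem lyapunov_step {n : ℕ} {G M : Matrix (Fin n) (Fin n) ℝ}
    (hLyap : Gᵀ * M * G - M = -1) (y : Fin n → ℝ) :
    (G *ᵥ y) ⬝ᵥ (M *ᵥ (G *ᵥ y)) = y ⬝ᵥ (M *ᵥ y) - y ⬝ᵥ y := by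
  have h : Gᵀ * M * G = M - 1 := by
    rw [sub_eq_iff_eq_add.mp hLyap, neg_add_eq_sub]
  calc (G *ᵥ y) ⬝ᵥ (M *ᵥ (G *ᵥ y)) = y ⬝ᵥ ((Gᵀ * M * G) *ᵥ y) := by
        rw [← mulVec_mulVec, ← mulVec_mulVec, dotProduct_mulVec y, vecMul_transpose]
    _ = y ⬝ᵥ (M *ᵥ y) - y ⬝ᵥ y := by
        rw [h, sub_mulVec, one_mulVec, dotProduct_sub]

theorem lyapunov_form_nonneg {n : ℕ} {G M : Matrix (Fin n) (Fin n) ℝ}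
    (hconv : ∀ y : Fin n → ℝ,
      Filter.Tendsto (fun k : ℕ => (G ^ k).mulVec y) Filter.atTop (nhds 0))
    (hLyap : Gᵀ * M * G - M = -1) (y : Fin n → ℝ) :
    0 ≤ y ⬝ᵥ (M *ᵥ y) := by
  have hcont : Continuous fun z : Fin n → ℝ => z ⬝ᵥ (M *ᵥ z) := by fun_prop
  have hlim := (hcont.tendsto 0).comp (hconv y)
  rw [zero_dotProduct] at hlim
  have hanti : Antitone ((fun z : Fin n → ℝ => z ⬝ᵥ (M *ᵥ z)) ∘ fun k : ℕ => (G ^ k) *ᵥ y) := by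
    refine antitone_nat_of_succ_le fun k => ?_
    have hsq : 0 ≤ (G ^ k *ᵥ y) ⬝ᵥ (G ^ k *ᵥ y) :=
      Finset.sum_nonneg fun i _ => mul_self_nonneg _
    simp only [Function.comp_apply]
    rw [pow_succ', ← mulVec_mulVec, lyapunov_step hLyap]
    linarith
  simpa using hanti.le_of_tendsto hlim 0

/-- If `G^k y → 0` for every `y` (which holds whenever the spectral
radius of `G` is less than `1`), and the symmetric matrix `M` satisfies the discrete
Lyapunov equation `GᵀMG - M = -I`, then `M` is positive definite. -/
theorem lyapunov_solution_posDef
    (n : ℕ) (G M : Matrix (Fin n) (Fin n) ℝ)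
    (hconv : ∀ y : Fin n → ℝ,
      Filter.Tendsto (fun k : ℕ => (G ^ k).mulVec y) Filter.atTop (nhds 0))
    (hMsymm : M.IsHermitian)
    (hLyap : Gᵀ * M * G - M = -1) :
    M.PosDef := by
  refine PosDef.of_dotProduct_mulVec_pos hMsymm fun y hy => ?_
  have hstep := lyapunov_step hLyap y
  have hnonneg := lyapunov_form_nonneg hconv hLyap (G *ᵥ y)
  have hpos : 0 < y ⬝ᵥ y := by
    simpa using dotProduct_star_self_pos_iff.mpr hy
  rw [star_trivial]
  linarith
end

section
/- Let A ∈ ℝ^{m×n}, b ∈ ℝ^m, G ∈ ℝ^{n×n}, P = {x ∈ ℝ^n : Ax ≤ b}, S_r = ⋂_{k=0}^{r} {x ∈ ℝ^n : A G^k x ≤ b} for integers r ≥ 0 with the convention S_{-1} = ℝ^n, and 𝒮 = ⋂_{k=0}^{∞} {x ∈ ℝ^n : A G^k x ≤ b}. Let E ⊆ P be invariant under G (i.e., x ∈ E implies Gx ∈ E), and for each integer r ≥ 0 define I_r(E) = S_{r-1} ∩ {x ∈ ℝ^n : G^r x ∈ E}. Then for every integer r ≥ 0: (i) I_r(E) ⊆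 𝒮; (ii) I_r(E) ⊆ I_{r+1}(E); and (iii) if I_r(E) = I_{r+1}(E), then I_k(E) = I_r(E) for all integers k ≥ r. -/
/-!
Invariance of `E ⊆ P` under `G` keeps the orbit of `x ∈ I r` in `E`, hence in `P`, from time `r` on.
This gives `I r ⊆ I (r + 1)`, and `I r ⊆ 𝒮` follows from this monotonicity. Stabilization comes from
the recursion `I (r + 1) = {x ∈ P | G x ∈ I r}`, obtained by splitting off the constraint `k = 0`:
each set is determined by its predecessor, so one equality `I r = I (r + 1)` propagates to all later
indices.
-/

open Matrix

/-- Let `E ⊆ P` be invariant under `G`, and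
`I_r(E) = S_{r-1} ∩ {x : G^r x ∈ E}` (with `S_{-1} = ℝ^n`, i.e.
`I_r(E) = {x : A G^k x ≤ b for k < r, and G^r x ∈ E}`). Then for every `r ≥ 0`:
(i) `I_r(E) ⊆ 𝒮`; (ii) `I_r(E) ⊆ I_{r+1}(E)`; (iii) if `I_r(E) = I_{r+1}(E)` then
`I_k(E) = I_r(E)` for all `k ≥ r`. -/
theorem inner_approx_nested_and_stabilizing
    (m n : ℕ) (A : Matrix (Fin m) (Fin n) ℝ) (b : Fin m → ℝ)
    (G : Matrix (Fin n) (Fin n) ℝ)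
    (P : Set (Fin n → ℝ)) (hP : P = {x : Fin n → ℝ | A.mulVec x ≤ b})
    (S : Set (Fin n → ℝ))
    (hS : S = ⋂ k : ℕ, {x : Fin n → ℝ | A.mulVec ((G ^ k).mulVec x) ≤ b})
    (E : Set (Fin n → ℝ)) (hEP : E ⊆ P)
    (hEinv : ∀ x ∈ E, G.mulVec x ∈ E)
    (I : ℕ → Set (Fin n → ℝ))
    (hI : ∀ r : ℕ, I r = {x : Fin n → ℝ |
      (∀ k < r, A.mulVec ((G ^ k).mulVec x) ≤ b) ∧ (G ^ r).mulVec x ∈ E}) :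
    ∀ r : ℕ,
      I r ⊆ S ∧
      I r ⊆ I (r + 1) ∧
      (I r = I (r + 1) → ∀ k : ℕ, r ≤ k → I k = I r) := by
  have hpow : ∀ (k : ℕ) (x : Fin n → ℝ),
      (G ^ (k + 1)).mulVec x = (G ^ k).mulVec (G.mulVec x) := fun k x => by
    rw [Matrix.mulVec_mulVec, pow_succ]
  have hpow' : ∀ (k : ℕ) (x : Fin n → ℝ),
      (G ^ (k + 1)).mulVec x = G.mulVec ((G ^ k).mulVec x) := fun k x => by
    rw [Matrix.mulVec_mulVec, pow_succ']
  have hE : ∀ y ∈ E, A.mulVec y ≤ b := fun y hy => by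
    have := hEP hy
    rwa [hP] at this
  have hrec : ∀ r x, x ∈ I (r + 1) ↔ A.mulVec x ≤ b ∧ G.mulVec x ∈ I r := by
    intro r x
    rw [hI, hI]
    simp only [Set.mem_ofPred_eq, hpow, Nat.forall_lt_succ_left', pow_zero, Matrix.one_mulVec,
      and_assoc]
  have hmono : ∀ r, I r ⊆ I (r + 1) := by
    intro r x hx
    rw [hI] at hx ⊢
    refine ⟨fun k hk => ?_, ?_⟩
    · rcases Nat.lt_succ_iff_lt_or_eq.mp hk with h | rfl
      · exact hx.1 k h
      · exact hE _ hx.2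
    · rw [hpow']
      exact hEinv _ hx.2
  refine fun r => ⟨?_, hmono r, ?_⟩
  · intro x hx
    rw [hS]
    refine Set.mem_iInter.mpr fun k => ?_
    -- The constraint at time `k` is one of those defining the larger set `I (r + k + 1)`.
    have h : x ∈ I (r + k + 1) := monotone_nat_of_le_succ hmono (by omega) hx
    rw [hI] at h
    exact h.1 k (by omega)
  · intro h k hk
    induction k, hk using Nat.le_induction with
    | base => rfl
    | succ k _ ih =>
      rw [h]
      ext x
      rw [hrec, hrec, ih]
end

section
/- Let A ∈ ℝ^{m×n}, b ∈ ℝ^m, G ∈ ℝ^{n×n}, P = {x ∈ ℝ^n : Ax ≤ b}, S_r = ⋂_{k=0}^{r} {x ∈ ℝ^n : A G^k x ≤ b} with S_{-1} = ℝ^n, 𝒮 = ⋂_{k=0}^{∞} {x ∈ ℝ^n : A G^k x ≤ b}, and I_r(E) = S_{r-1} ∩ {x ∈ ℝ^n : G^r x ∈ E}. Assume P is bounded, every complex eigenvalue μ of G satisfies |μ| < 1, E ⊆ P is invariant under G (x ∈ E implies Gx ∈ E), and E contains the origin in its interior. If I_r(E) = I_{r+1}(E) for some integer r ≥ 0, then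 𝒮 = I_r(E). -/
/-!
Membership `x ∈ I (s + 1)` means `A x ≤ b` together with `G x ∈ I s`, and `S` is invariant
under `G`. Since the spectral radius of `G` is less than `1`, Gelfand's formula gives `G ^ k → 0`
(`tendsto_pow_zero_of_spectrum`), so the orbit of any `x ∈ S` enters `E`, a neighbourhood of `0`,
and by invariance of `E` some `N` satisfies `G ^ (r + N) x ∈ E`. Induction on `N` yields
`x ∈ I r`: the induction hypothesis for `G x` gives `G x ∈ I r`, whence
`x ∈ I (r + 1) = I r`. Conversely, an orbit starting in `I r` satisfies the constraints up to time
`r - 1` by definition, and afterwards because it stays in `E ⊆ P`.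
-/

open Matrix Filter Topology

/-- In a complex Banach algebra, Gelfand's formula bounds `‖a ^ k‖` eventually by `ρ ^ k`, for any
`ρ` strictly between the spectral radius and `1`. -/
theorem tendsto_pow_zero_of_spectrum {B : Type*} [NormedRing B] [NormedAlgebra ℂ B]
    [CompleteSpace B] (a : B) (ha : ∀ μ ∈ spectrum ℂ a, ‖μ‖ < 1) :
    Tendsto (fun k : ℕ => a ^ k) atTop (𝓝 0) := by
  rcases subsingleton_or_nontrivial B with hB | hB
  · exact tendsto_const_nhds.congr fun k => Subsingleton.elim _ _
  have hlt : spectralRadius ℂ a < (1 : NNReal) :=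
    spectrum.spectralRadius_lt_of_forall_lt a fun z hz => by exact_mod_cast ha z hz
  obtain ⟨ρ, hρ₁, hρ₂⟩ := ENNReal.lt_iff_exists_nnreal_btwn.1 hlt
  have hev := (spectrum.pow_nnnorm_pow_one_div_tendsto_nhds_spectralRadius a).eventually
    (gt_mem_nhds hρ₁)
  have hρ : (ρ : ℝ) < 1 := by exact_mod_cast hρ₂
  refine squeeze_zero_norm' ?_ (tendsto_pow_atTop_nhds_zero_of_lt_one ρ.2 hρ)
  filter_upwards [hev, eventually_gt_atTop 0] with k hk hk0
  have hk0' : (0 : ℝ) < k := by exact_mod_cast hk0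
  have h1 : (‖a ^ k‖₊ : ENNReal) ≤ (ρ : ENNReal) ^ k := by
    have := (ENNReal.rpow_inv_le_iff hk0').1 (by simpa using hk.le)
    rwa [ENNReal.rpow_natCast] at this
  exact_mod_cast h1

/-- The complex spectral condition on a real matrix makes all of its real orbits tend to `0`. -/
theorem tendsto_pow_mulVec_zero {n : ℕ} (G : Matrix (Fin n) (Fin n) ℝ)
    (hspec : ∀ μ ∈ spectrum ℂ (G.map Complex.ofReal), ‖μ‖ < 1) (x : Fin n → ℝ) :
    Tendsto (fun k : ℕ => (G ^ k).mulVec x) atTop (𝓝 0) := by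
  have hC : Tendsto (fun k : ℕ => (G.map Complex.ofReal) ^ k) atTop (𝓝 0) := by
    -- Any Banach algebra norm serves: the `ℓ^∞` operator norm induces the entrywise topology.
    let : NormedRing (Matrix (Fin n) (Fin n) ℂ) := Matrix.linftyOpNormedRing
    let : NormedAlgebra ℂ (Matrix (Fin n) (Fin n) ℂ) := Matrix.linftyOpNormedAlgebra
    have : CompleteSpace (Matrix (Fin n) (Fin n) ℂ) := FiniteDimensional.complete ℂ _
    exact tendsto_pow_zero_of_spectrum _ hspec
  have hre : Continuous fun M : Matrix (Fin n) (Fin n) ℂ => (M.map Complex.re).mulVec x :=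
    (continuous_id.matrix_map Complex.continuous_re).matrix_mulVec continuous_const
  have h := (hre.tendsto 0).comp hC
  have hG : ∀ k : ℕ, ((G.map Complex.ofReal) ^ k).map Complex.re = G ^ k := by
    intro k
    have hp : (G ^ k).map Complex.ofReal = (G.map Complex.ofReal) ^ k :=
      Matrix.map_pow G Complex.ofRealHom k
    rw [← hp]
    ext i j
    simp
  have hz : (Matrix.map (0 : Matrix (Fin n) (Fin n) ℂ) Complex.re).mulVec x = 0 := by
    rw [Matrix.map_zero _ Complex.zero_re, Matrix.zero_mulVec]
  rw [hz] at h
  exact h.congr fun k => by simp only [Function.comp_apply, hG]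

/-- Assume `P` is bounded, the spectral radius of `G` is `< 1`,
`E ⊆ P` is invariant under `G`, and `E` contains the origin in its interior.
If `I_r(E) = I_{r+1}(E)` for some `r ≥ 0`, then `𝒮 = I_r(E)`. -/
theorem inner_approx_stabilizes_to_S
    (m n : ℕ) (A : Matrix (Fin m) (Fin n) ℝ) (b : Fin m → ℝ)
    (G : Matrix (Fin n) (Fin n) ℝ)
    (P : Set (Fin n → ℝ)) (hP : P = {x : Fin n → ℝ | A.mulVec x ≤ b})
    (S : Set (Fin n → ℝ))
    (hS : S = ⋂ k : ℕ, {x : Fin n → ℝ | A.mulVec ((G ^ k).mulVec x) ≤ b})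
    (hbdd : Bornology.IsBounded P)
    (hspec : ∀ μ ∈ spectrum ℂ (G.map Complex.ofReal), ‖μ‖ < 1)
    (E : Set (Fin n → ℝ)) (hEP : E ⊆ P)
    (hEinv : ∀ x ∈ E, G.mulVec x ∈ E)
    (h0E : (0 : Fin n → ℝ) ∈ interior E)
    (I : ℕ → Set (Fin n → ℝ))
    (hI : ∀ r : ℕ, I r = {x : Fin n → ℝ |
      (∀ k < r, A.mulVec ((G ^ k).mulVec x) ≤ b) ∧ (G ^ r).mulVec x ∈ E})
    (r : ℕ) (h : I r = I (r + 1)) :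
    S = I r := by
  have hcomm : ∀ (k : ℕ) (x : Fin n → ℝ), (G ^ k).mulVec (G.mulVec x) = (G ^ (k + 1)).mulVec x :=
    fun k x => by rw [Matrix.mulVec_mulVec, ← pow_succ]
  have hEiter : ∀ (j s : ℕ) (x : Fin n → ℝ),
      (G ^ s).mulVec x ∈ E → (G ^ (s + j)).mulVec x ∈ E := by
    intro j s x hx
    induction j with
    | zero => exact hx
    | succ j ih =>
      have := hEinv _ ih
      rwa [Matrix.mulVec_mulVec, ← pow_succ'] at this
  have hIS : ∀ (N : ℕ) (x : Fin n → ℝ), (∀ k, A.mulVec ((G ^ k).mulVec x) ≤ b) →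
      (G ^ (r + N)).mulVec x ∈ E → x ∈ I r := by
    intro N
    induction N with
    | zero =>
      intro x hx hE
      rw [hI]
      exact ⟨fun k _ => hx k, hE⟩
    | succ N ih =>
      intro x hx hE
      have hGx : G.mulVec x ∈ I r := by
        refine ih _ (fun k => ?_) ?_
        · rw [hcomm]
          exact hx (k + 1)
        · rw [hcomm]
          exact hE
      rw [hI] at hGx
      rw [h, hI]
      refine ⟨fun k _ => hx k, ?_⟩
      rw [← hcomm]
      exact hGx.2
  ext x
  rw [hS, Set.mem_iInter]
  constructor
  · intro hx
    have hev := (tendsto_pow_mulVec_zero G hspec x).eventually (mem_interior_iff_mem_nhds.1 h0E)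
    obtain ⟨N, hN⟩ := hev.exists
    refine hIS N x hx ?_
    rw [add_comm]
    exact hEiter r N x hN
  · intro hx k
    rw [hI] at hx
    rcases lt_or_ge k r with hk | hk
    · exact hx.1 k hk
    · obtain ⟨j, rfl⟩ := Nat.exists_eq_add_of_le hk
      have := hEP (hEiter j r x hx.2)
      rwa [hP] at this
end

section
/- Let A ∈ ℝ^{m×n}, b ∈ ℝ^m, G ∈ ℝ^{n×n}, P = {x ∈ ℝ^n : Ax ≤ b}, S_r = ⋂_{k=0}^{r} {x ∈ ℝ^n : A G^k x ≤ b} with S_{-1} = ℝ^n, 𝒮 = ⋂_{k=0}^{∞} {x ∈ ℝ^n : A G^k x ≤ b}, and I_r(E) = S_{r-1} ∩ {x ∈ ℝ^n : G^r x ∈ E}. Assume P is bounded, every complex eigenvalue μ of G satisfies |μ| < 1, E ⊆ P is invariant under G (x ∈ E implies Gx ∈ E), and E contains the origin in its interior. Then there exists a nonnegative integer t such that 𝒮 = I_r(E) for all integers r ≥ t. -/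
/-!
Since every complex eigenvalue of `G` lies in the open unit disc, Gelfand's formula forces
`G ^ r → 0` (`norm_pow_tendsto_zero`).  As `P` is bounded, `G ^ r` therefore maps all of `P` into a
fixed ball around the origin contained in `E` once `r` is large, which gives `S ⊆ I r`.
Conversely, if `G ^ r x ∈ E`, invariance keeps the whole later orbit in `E ⊆ P`, so `I r ⊆ S` holds
for every `r`.
-/

open Matrix

section Norms

-- The operator norm induced by the sup norm, the norm carried by `Fin n → ℝ`.
attribute [local instance] Matrix.linftyOpNormedAddCommGroup Matrix.linftyOpNormedSpace
  Matrix.linftyOpNormedRing Matrix.linftyOpNormedAlgebra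

/-- By Gelfand's formula the powers eventually decay like `q ^ k` for some `q < 1`; the trivial ring
(the case `n = 0` for matrices) is separate, since its spectrum is empty. -/
lemma norm_pow_tendsto_zero {B : Type*} [NormedRing B] [NormedAlgebra ℂ B] [CompleteSpace B]
    (a : B) (h : ∀ μ ∈ spectrum ℂ a, ‖μ‖ < 1) :
    Filter.Tendsto (fun k : ℕ => ‖a ^ k‖) Filter.atTop (nhds 0) := by
  cases subsingleton_or_nontrivial B with
  | inl hs =>
    have : (fun k : ℕ => ‖a ^ k‖) = fun _ => 0 := by
      funext k
      rw [Subsingleton.elim (a ^ k) 0, norm_zero]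
    rw [this]
    exact tendsto_const_nhds
  | inr hn =>
    have h1 : spectralRadius ℂ a < ((1 : NNReal) : ENNReal) :=
      spectrum.spectralRadius_lt_of_forall_lt a fun μ hμ => by
        exact_mod_cast h μ hμ
    obtain ⟨q, hq, hq1⟩ := ENNReal.lt_iff_exists_nnreal_btwn.1 h1
    have hq1' : q < 1 := by exact_mod_cast hq1
    have hev := (spectrum.pow_nnnorm_pow_one_div_tendsto_nhds_spectralRadius a).eventually_lt_const hq
    have hq0 : Filter.Tendsto (fun k : ℕ => (q : ℝ) ^ k) Filter.atTop (nhds 0) :=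
      tendsto_pow_atTop_nhds_zero_of_lt_one q.2 (by exact_mod_cast hq1')
    refine squeeze_zero' (Filter.Eventually.of_forall fun _ => norm_nonneg _) ?_ hq0
    filter_upwards [hev, Filter.eventually_gt_atTop 0] with k hk hk0
    have hk0' : (0 : ℝ) < k := by exact_mod_cast hk0
    rw [one_div, ENNReal.rpow_inv_lt_iff hk0', ENNReal.rpow_natCast] at hk
    have hk' : ‖a ^ k‖₊ < q ^ k := by exact_mod_cast hk
    exact_mod_cast hk'.le

/-- The powers of `G` tend to zero uniformly on any ball, in the sup norm of `ℝ^n`. -/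
lemma eventually_norm_pow_mulVec_lt {n : ℕ} (G : Matrix (Fin n) (Fin n) ℝ)
    (hspec : ∀ μ ∈ spectrum ℂ (G.map Complex.ofReal), ‖μ‖ < 1) (R δ : ℝ) (hδ : 0 < δ) :
    ∃ t : ℕ, ∀ r ≥ t, ∀ x : Fin n → ℝ, ‖x‖ ≤ R → ‖(G ^ r).mulVec x‖ < δ := by
  have hnorm : ∀ M : Matrix (Fin n) (Fin n) ℝ, ‖M.map Complex.ofReal‖ = ‖M‖ := fun M => by
    simp [Matrix.linfty_opNorm_def]
  have ht := norm_pow_tendsto_zero (G.map Complex.ofReal) hspec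
  have hpow : ∀ k : ℕ, ‖(G.map Complex.ofReal) ^ k‖ = ‖G ^ k‖ := fun k => by
    rw [← hnorm]
    exact congrArg _ (Matrix.map_pow G Complex.ofRealHom k).symm
  simp only [hpow] at ht
  have ht' := ht.mul_const R
  rw [zero_mul] at ht'
  obtain ⟨t, h⟩ := Filter.eventually_atTop.1 (ht'.eventually_lt_const hδ)
  refine ⟨t, fun r hr x hx => ?_⟩
  calc ‖(G ^ r).mulVec x‖ ≤ ‖G ^ r‖ * ‖x‖ := Matrix.linfty_opNorm_mulVec _ _
    _ ≤ ‖G ^ r‖ * R := by gcongr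
    _ < δ := h r hr

end Norms

/-- Assume `P` is bounded, the spectral radius of `G` is `< 1`,
`E ⊆ P` is invariant under `G`, and `E` contains the origin in its interior.
Then there exists a nonnegative integer `t` with `𝒮 = I_r(E)` for all `r ≥ t`. -/
theorem inner_approx_finite_convergence
    (m n : ℕ) (A : Matrix (Fin m) (Fin n) ℝ) (b : Fin m → ℝ)
    (G : Matrix (Fin n) (Fin n) ℝ)
    (P : Set (Fin n → ℝ)) (hP : P = {x : Fin n → ℝ | A.mulVec x ≤ b})
    (S : Set (Fin n → ℝ))
    (hS : S = ⋂ k : ℕ, {x : Fin n → ℝ | A.mulVec ((G ^ k).mulVec x) ≤ b})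
    (hbdd : Bornology.IsBounded P)
    (hspec : ∀ μ ∈ spectrum ℂ (G.map Complex.ofReal), ‖μ‖ < 1)
    (E : Set (Fin n → ℝ)) (hEP : E ⊆ P)
    (hEinv : ∀ x ∈ E, G.mulVec x ∈ E)
    (h0E : (0 : Fin n → ℝ) ∈ interior E)
    (I : ℕ → Set (Fin n → ℝ))
    (hI : ∀ r : ℕ, I r = {x : Fin n → ℝ |
      (∀ k < r, A.mulVec ((G ^ k).mulVec x) ≤ b) ∧ (G ^ r).mulVec x ∈ E}) :
    ∃ t : ℕ, ∀ r : ℕ, t ≤ r → S = I r := by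
  obtain ⟨R, hR⟩ := hbdd.exists_norm_le
  obtain ⟨δ, hδ, hball⟩ := Metric.mem_nhds_iff.1 (mem_interior_iff_mem_nhds.1 h0E)
  obtain ⟨t, ht⟩ := eventually_norm_pow_mulVec_lt G hspec R δ hδ
  have hinv : ∀ (j : ℕ) (y : Fin n → ℝ), y ∈ E → (G ^ j).mulVec y ∈ E := by
    intro j
    induction j with
    | zero => intro y hy; simpa using hy
    | succ j ih =>
      intro y hy
      rw [pow_succ, ← Matrix.mulVec_mulVec]
      exact ih _ (hEinv y hy)
  refine ⟨t, fun r hr => ?_⟩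
  rw [hS, hI]
  ext x
  simp only [Set.mem_iInter, Set.mem_ofPred_eq]
  constructor
  · intro hx
    refine ⟨fun k _ => hx k, hball ?_⟩
    have hxP : x ∈ P := by
      rw [hP]
      simpa using hx 0
    rw [mem_ball_zero_iff]
    exact ht r hr x (hR x hxP)
  · rintro ⟨hlt, hxE⟩ k
    rcases lt_or_ge k r with hk | hk
    · exact hlt k hk
    · have hmem := hEP (hinv (k - r) _ hxE)
      rw [Matrix.mulVec_mulVec, ← pow_add, Nat.sub_add_cancel hk, hP] at hmem
      exact hmem
end

section
/- Let G₁, …, G_s ∈ ℝ^{n×n}, and for each integer k ≥ 0 let 𝒢^k denote the set of all products G_{σ₁}⋯G_{σ_k} of length k of matrices from {G₁, …, G_s} (with 𝒢^0 = {I}). Let A ∈ ℝ^{m×n}, b ∈ ℝ^m, P = {x ∈ ℝ^n : Ax ≤ b}, S_r = ⋂_{k=0}^{r} {x ∈ ℝ^n : AGx ≤ b for all G ∈ 𝒢^k}, and 𝒮 = ⋂_{k=0}^{∞} {x ∈ ℝ^n : AGx ≤ b for all G ∈ 𝒢^k}. Assume there exist a constant C > 0 and a scalar ρ̂ ∈ [0,1)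 such that every G ∈ 𝒢^k satisfies ‖G‖ ≤ C·ρ̂^k for all k ≥ 0, where ‖·‖ is the operator norm (this condition holds if and only if the joint spectral radius of {G₁, …, G_s} is less than 1). If in addition P is bounded and the origin lies in the interior of P, then there exists a nonnegative integer r such that 𝒮 = S_r. -/
/-!
A point `x ∈ P` has Euclidean norm at most some `R`, and `P` contains a Euclidean ball of some
radius `ε` around the origin. Once `C * ρ ^ k * R < ε`, every product `M` of length `k` maps `P`
into that ball, hence into `P`. So the constraints for all lengths beyond some `r` already follow
from the length-`0` constraint `x ∈ P`, which is among those defining `S_r`.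
-/

open Matrix

/-- The set `𝒢^k` of all products of length `k` of matrices from `{G 0, …, G (s-1)}`
(`𝒢^0 = {I}`). -/
def matrixProdsOfLength {n s : ℕ} (G : Fin s → Matrix (Fin n) (Fin n) ℝ) (k : ℕ) :
    Set (Matrix (Fin n) (Fin n) ℝ) :=
  {M | ∃ σ : Fin k → Fin s, M = (List.ofFn fun j => G (σ j)).prod}

/-- Long products map `P` into itself: beyond some length, the contraction `C * ρ ^ k` shrinks the
bounded set `P` into a ball around the origin contained in `P`. -/
theorem exists_forall_prod_mulVec_mem {n s : ℕ} (G : Fin s → Matrix (Fin n) (Fin n) ℝ)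
    (P : Set (Fin n → ℝ)) (C ρ : ℝ) (hρ0 : 0 ≤ ρ) (hρ1 : ρ < 1)
    (hnorm : ∀ k : ℕ, ∀ M ∈ matrixProdsOfLength G k,
      ‖Matrix.toEuclideanCLM (𝕜 := ℝ) M‖ ≤ C * ρ ^ k)
    (hbdd : Bornology.IsBounded P)
    (h0 : (0 : Fin n → ℝ) ∈ interior P) :
    ∃ r : ℕ, ∀ k ≥ r, ∀ M ∈ matrixProdsOfLength G k, ∀ x ∈ P, M.mulVec x ∈ P := by
  -- `P` carries the sup norm, so boundedness and the interior ball are transported to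
  -- `EuclideanSpace`, where the operator norm bound applies.
  let e := EuclideanSpace.equiv (Fin n) ℝ
  obtain ⟨R, hR⟩ := (e.symm.lipschitz.isBounded_image hbdd).exists_norm_le
  have hnhds : e ⁻¹' P ∈ nhds (0 : EuclideanSpace ℝ (Fin n)) :=
    e.continuous.continuousAt.preimage_mem_nhds
      (by rw [map_zero]; exact mem_interior_iff_mem_nhds.1 h0)
  obtain ⟨ε, hε, hball⟩ := Metric.mem_nhds_iff.1 hnhds
  have hlim : Filter.Tendsto (fun k : ℕ => C * ρ ^ k * R) Filter.atTop (nhds 0) := by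
    simpa using ((tendsto_pow_atTop_nhds_zero_of_lt_one hρ0 hρ1).const_mul C).mul_const R
  obtain ⟨r, hr⟩ := Filter.eventually_atTop.1 (hlim.eventually (gt_mem_nhds hε))
  refine ⟨r, fun k hk M hM x hx => ?_⟩
  have hx' : ‖e.symm x‖ ≤ R := hR _ ⟨x, hx, rfl⟩
  have hMx : ‖Matrix.toEuclideanCLM (𝕜 := ℝ) M (e.symm x)‖ < ε := by
    refine lt_of_le_of_lt ((Matrix.toEuclideanCLM (𝕜 := ℝ) M).le_opNorm _) ?_
    refine lt_of_le_of_lt ?_ (hr k hk)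
    exact mul_le_mul (hnorm k M hM) hx' (norm_nonneg _) ((norm_nonneg _).trans (hnorm k M hM))
  exact hball (mem_ball_zero_iff.2 hMx)

/-- If all products of length `k` from `{G₁,…,G_s}` have operator norm
at most `C·ρ̂^k` with `ρ̂ < 1` (equivalently, the joint spectral radius is `< 1`), `P` is
bounded, and the origin is in the interior of `P`, then `𝒮 = S_r` for some `r ≥ 0`. -/
theorem switched_outer_approx_finite_convergence
    (m n s : ℕ) (G : Fin s → Matrix (Fin n) (Fin n) ℝ)
    (A : Matrix (Fin m) (Fin n) ℝ) (b : Fin m → ℝ)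
    (P : Set (Fin n → ℝ)) (hP : P = {x : Fin n → ℝ | A.mulVec x ≤ b})
    (Sr : ℕ → Set (Fin n → ℝ))
    (hSr : ∀ r : ℕ, Sr r = ⋂ k ≤ r,
      {x : Fin n → ℝ | ∀ M ∈ matrixProdsOfLength G k, A.mulVec (M.mulVec x) ≤ b})
    (S : Set (Fin n → ℝ))
    (hS : S = ⋂ k : ℕ,
      {x : Fin n → ℝ | ∀ M ∈ matrixProdsOfLength G k, A.mulVec (M.mulVec x) ≤ b})
    (C ρ : ℝ) (hC : 0 < C) (hρ0 : 0 ≤ ρ) (hρ1 : ρ < 1)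
    (hnorm : ∀ k : ℕ, ∀ M ∈ matrixProdsOfLength G k,
      ‖Matrix.toEuclideanCLM (𝕜 := ℝ) M‖ ≤ C * ρ ^ k)
    (hbdd : Bornology.IsBounded P)
    (h0 : (0 : Fin n → ℝ) ∈ interior P) :
    ∃ r : ℕ, S = Sr r := by
  obtain ⟨r, hr⟩ := exists_forall_prod_mulVec_mem G P C ρ hρ0 hρ1 hnorm hbdd h0
  refine ⟨r, ?_⟩
  rw [hS, hSr]
  refine Set.Subset.antisymm (fun x hx => ?_) (fun x hx => ?_)
  · exact Set.mem_iInter₂.2 fun k _ => Set.mem_iInter.1 hx k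
  · refine Set.mem_iInter.2 fun k => ?_
    rcases le_total k r with hk | hk
    · exact Set.mem_iInter₂.1 hx k hk
    · intro M hM
      -- The empty product is the identity, so the length-`0` constraint says `x ∈ P`.
      have hxP : x ∈ P := by
        have h := Set.mem_iInter₂.1 hx 0 (Nat.zero_le r) 1 ⟨Fin.elim0, by simp⟩
        rw [hP]
        simpa using h
      have h := hr k hk M hM x hxP
      rwa [hP] at h
end

section
/- Let G₁, …, G_s ∈ ℝ^{n×n} and 𝒢^k be the set of all products of length k of matrices from {G₁, …, G_s} (𝒢^0 = {I}). Let A ∈ ℝ^{m×n}, b ∈ ℝ^m, P = {x ∈ ℝ^n : Ax ≤ b}, S_r = ⋂_{k=0}^{r} {x ∈ ℝ^n : AGx ≤ b for all G ∈ 𝒢^k} with S_{-1} = ℝ^n, and 𝒮 = ⋂_{k=0}^{∞} {x ∈ ℝ^n : AGx ≤ b for all G ∈ 𝒢^k}. Let E ⊆ P be a convex set invariant under each Gᵢ (x ∈ E implies Gᵢx ∈ E for i = 1, …, s), and for each integer r ≥ 0 define I_r(E) = S_{r-1} ∩ {x ∈ ℝ^n : Gx ∈ E for all G ∈ 𝒢^r}.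 Then for every integer r ≥ 0: I_r(E) ⊆ 𝒮 and I_r(E) ⊆ I_{r+1}(E). Moreover, if P is bounded, E contains the origin in its interior, and there exist C > 0 and ρ̂ ∈ [0,1) such that every G ∈ 𝒢^k satisfies ‖G‖ ≤ C·ρ̂^k for all k ≥ 0 (equivalently, the joint spectral radius of {G₁, …, G_s} is less than 1), then there exists a nonnegative integer t such that 𝒮 = I_r(E) for all r ≥ t. -/
/-!
A product of length `k + 1` is some `G i` times a product of length `k`. So if all products of
length `r` send `x` into the invariant set `E`, then so do all products of length `r + 1`; with
`E ⊆ P` this gives `I r ⊆ I (r + 1)`. Hence `I r ⊆ S`: a point of `I r` lies in every later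
`I q`, so it satisfies the constraints for all lengths `k < q`.

For the converse inclusion for large `r`: `S ⊆ P` is bounded and products of length `r` shrink
uniformly like `C * ρ ^ r`, so eventually they map all of `S` into a ball around the origin that
lies in `E`.
-/

open Matrix

lemma exists_mul_of_mem_matrixProdsOfLength_succ {n s k : ℕ}
    {G : Fin s → Matrix (Fin n) (Fin n) ℝ} {M : Matrix (Fin n) (Fin n) ℝ}
    (hM : M ∈ matrixProdsOfLength G (k + 1)) :
    ∃ i, ∃ N ∈ matrixProdsOfLength G k, M = G i * N := by
  obtain ⟨σ, rfl⟩ := hM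
  exact ⟨σ 0, _, ⟨fun j => σ j.succ, rfl⟩, by simp [List.ofFn_succ]⟩

lemma one_mem_matrixProdsOfLength_zero {n s : ℕ} (G : Fin s → Matrix (Fin n) (Fin n) ℝ) :
    1 ∈ matrixProdsOfLength G 0 :=
  ⟨Fin.elim0, by simp⟩

/-- Conversion of a Euclidean operator-norm bound into a sup-norm bound, the constant `K` being
uniform in the matrix. -/
lemma exists_norm_mulVec_le (n : ℕ) :
    ∃ K : ℝ, ∀ (M : Matrix (Fin n) (Fin n) ℝ) (x : Fin n → ℝ),
      ‖M.mulVec x‖ ≤ ‖Matrix.toEuclideanCLM (𝕜 := ℝ) M‖ * (K * ‖x‖) := by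
  let e : (Fin n → ℝ) →L[ℝ] EuclideanSpace ℝ (Fin n) :=
    (EuclideanSpace.equiv (Fin n) ℝ).symm.toContinuousLinearMap
  refine ⟨‖e‖, fun M x => ?_⟩
  calc ‖M.mulVec x‖ ≤ ‖Matrix.toEuclideanCLM (𝕜 := ℝ) M (e x)‖ := by
        refine (pi_norm_le_iff_of_nonneg (norm_nonneg _)).2 fun i => ?_
        exact PiLp.norm_apply_le (Matrix.toEuclideanCLM (𝕜 := ℝ) M (e x)) i
    _ ≤ ‖Matrix.toEuclideanCLM (𝕜 := ℝ) M‖ * ‖e x‖ := ContinuousLinearMap.le_opNorm _ _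
    _ ≤ _ := by gcongr; exact e.le_opNorm x

/-- For a convex set `E ⊆ P` invariant under each `Gᵢ` and
`I_r(E) = S_{r-1} ∩ {x : Gx ∈ E ∀ G ∈ 𝒢^r}`: `I_r(E) ⊆ 𝒮` and `I_r(E) ⊆ I_{r+1}(E)` for
all `r ≥ 0`; moreover, if `P` is bounded, `E` contains the origin in its interior, and
products of length `k` have norm at most `C·ρ̂^k` with `ρ̂ < 1` (joint spectral radius
`< 1`), then `𝒮 = I_r(E)` for all `r` beyond some `t`. -/
theorem switched_inner_approx_properties
    (m n s : ℕ) (G : Fin s → Matrix (Fin n) (Fin n) ℝ)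
    (A : Matrix (Fin m) (Fin n) ℝ) (b : Fin m → ℝ)
    (P : Set (Fin n → ℝ)) (hP : P = {x : Fin n → ℝ | A.mulVec x ≤ b})
    (S : Set (Fin n → ℝ))
    (hS : S = ⋂ k : ℕ,
      {x : Fin n → ℝ | ∀ M ∈ matrixProdsOfLength G k, A.mulVec (M.mulVec x) ≤ b})
    (E : Set (Fin n → ℝ)) (hEP : E ⊆ P) (hEconv : Convex ℝ E)
    (hEinv : ∀ x ∈ E, ∀ i : Fin s, (G i).mulVec x ∈ E)
    (I : ℕ → Set (Fin n → ℝ))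
    (hI : ∀ r : ℕ, I r = {x : Fin n → ℝ |
      (∀ k < r, ∀ M ∈ matrixProdsOfLength G k, A.mulVec (M.mulVec x) ≤ b) ∧
      (∀ M ∈ matrixProdsOfLength G r, M.mulVec x ∈ E)}) :
    (∀ r : ℕ, I r ⊆ S) ∧
    (∀ r : ℕ, I r ⊆ I (r + 1)) ∧
    (Bornology.IsBounded P → (0 : Fin n → ℝ) ∈ interior E →
      (∃ C ρ : ℝ, 0 < C ∧ 0 ≤ ρ ∧ ρ < 1 ∧
        ∀ k : ℕ, ∀ M ∈ matrixProdsOfLength G k,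
          ‖Matrix.toEuclideanCLM (𝕜 := ℝ) M‖ ≤ C * ρ ^ k) →
      ∃ t : ℕ, ∀ r : ℕ, t ≤ r → S = I r) := by
  have step : ∀ r, I r ⊆ I (r + 1) := by
    intro r x hx
    rw [hI] at hx ⊢
    obtain ⟨h1, h2⟩ := hx
    refine ⟨fun k hk M hM => ?_, fun M hM => ?_⟩
    · rcases Nat.lt_succ_iff_lt_or_eq.1 hk with h | rfl
      · exact h1 k h M hM
      · have := hEP (h2 M hM)
        rwa [hP] at this
    · obtain ⟨i, N, hN, rfl⟩ := exists_mul_of_mem_matrixProdsOfLength_succ hM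
      rw [← Matrix.mulVec_mulVec]
      exact hEinv _ (h2 N hN) i
  have mono : Monotone I := monotone_nat_of_le_succ step
  have sub : ∀ r, I r ⊆ S := by
    intro r x hx
    rw [hS]
    refine Set.mem_iInter.2 fun k M hM => ?_
    have h := mono (show r ≤ r + k + 1 by omega) hx
    rw [hI] at h
    exact h.1 k (by omega) M hM
  refine ⟨sub, step, fun hb h0 ⟨C, ρ, hC, hρ0, hρ1, hbd⟩ => ?_⟩
  obtain ⟨R, hR⟩ := hb.exists_norm_le
  obtain ⟨ε, hε, hball⟩ := Metric.mem_nhds_iff.1 (mem_interior_iff_mem_nhds.1 h0)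
  obtain ⟨K, hK⟩ := exists_norm_mulVec_le n
  have hlim : Filter.Tendsto (fun r : ℕ => C * ρ ^ r * (|K| * R)) Filter.atTop (nhds 0) := by
    simpa using
      ((tendsto_pow_atTop_nhds_zero_of_lt_one hρ0 hρ1).const_mul C).mul_const (|K| * R)
  obtain ⟨t, ht⟩ := Filter.eventually_atTop.1 (hlim.eventually (gt_mem_nhds hε))
  refine ⟨t, fun r hr => (Set.Subset.antisymm (fun x hx => ?_) (sub r))⟩
  have hx' : ∀ k, ∀ M ∈ matrixProdsOfLength G k, A.mulVec (M.mulVec x) ≤ b := by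
    rw [hS] at hx
    exact fun k => Set.mem_iInter.1 hx k
  have hxR : ‖x‖ ≤ R := by
    apply hR
    rw [hP]
    simpa using hx' 0 1 (one_mem_matrixProdsOfLength_zero G)
  rw [hI]
  refine ⟨fun k _ => hx' k, fun M hM => hball ?_⟩
  rw [mem_ball_zero_iff]
  calc ‖M.mulVec x‖ ≤ ‖Matrix.toEuclideanCLM (𝕜 := ℝ) M‖ * (K * ‖x‖) := hK M x
    _ ≤ ‖Matrix.toEuclideanCLM (𝕜 := ℝ) M‖ * (|K| * R) := by
        gcongr
        exact le_abs_self K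
    _ ≤ C * ρ ^ r * (|K| * R) := by
        have : 0 ≤ R := (norm_nonneg x).trans hxR
        gcongr
        exact hbd r M hM
    _ < ε := ht r hr
end

section
/- Let s ≥ 1 and l ≥ 2 be integers and G₁, …, G_s ∈ ℝ^{n×n}. Suppose that for every multi-index π ∈ {1, …, s}^{l-1} there is a symmetric positive definite matrix H_π ∈ ℝ^{n×n}, and that for every σ ∈ {1, …, s}^{l-2} and all i, j ∈ {1, …, s}, the matrix H_{σj} - G_jᵀ H_{iσ} G_j is positive semidefinite, where iσ denotes the multi-index obtained by prepending i to σ and σj the one obtained by appending j to σ. Then for every scalar α ≥ 0, the set F_α = {x ∈ ℝ^n : xᵀH_πx ≤ α for all π ∈ {1, …, s}^{l-1}} is invariant under multiplication by each G_j, i.e., x ∈ F_α implies G_j x ∈ F_α for all j ∈ {1, …, s}. -/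
open Matrix

/-- Let `l = t + 2 ≥ 2` and `s ≥ 1`. Multi-indices `π` of length
`l - 1 = t + 1` index symmetric positive definite matrices `H_π`, and suppose
`G_jᵀ H_{iσ} G_j ⪯ H_{σj}` for all `σ ∈ {1,…,s}^{l-2}` and `i, j ∈ {1,…,s}` (where `iσ`
prepends `i` and `σj` appends `j`). Then for every `α ≥ 0`, the set
`F_α = {x : xᵀH_πx ≤ α ∀π}` is invariant under multiplication by each `G_j`. -/
theorem multi_ellipsoid_set_invariant
    (n s t : ℕ) (hs : 0 < s)
    (G : Fin s → Matrix (Fin n) (Fin n) ℝ)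
    (H : (Fin (t + 1) → Fin s) → Matrix (Fin n) (Fin n) ℝ)
    (hHpos : ∀ π : Fin (t + 1) → Fin s, (H π).PosDef)
    (hlmi : ∀ (σ : Fin t → Fin s) (i j : Fin s),
      (H (Fin.snoc σ j) - (G j)ᵀ * H (Fin.cons i σ) * G j).PosSemidef)
    (α : ℝ) (hα : 0 ≤ α) :
    ∀ x : Fin n → ℝ,
      (∀ π : Fin (t + 1) → Fin s, x ⬝ᵥ (H π).mulVec x ≤ α) →
      ∀ j : Fin s, ∀ π : Fin (t + 1) → Fin s,
        (G j).mulVec x ⬝ᵥ (H π).mulVec ((G j).mulVec x) ≤ α := by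
  intro x hx j π
  -- Write `π = iσ` with `i = π 0`: the inequality for `(σ, i, j)` bounds the form of `H_π` at
  -- `G_j x` by the form of `H_{σj}` at `x`, which is at most `α`.
  have hform := (hlmi (Fin.tail π) (π 0) j).dotProduct_mulVec_nonneg x
  rw [Fin.cons_self_tail, star_trivial, sub_mulVec, dotProduct_sub] at hform
  have hpull : x ⬝ᵥ ((G j)ᵀ * H π * G j).mulVec x
      = (G j).mulVec x ⬝ᵥ (H π).mulVec ((G j).mulVec x) := by
    rw [← mulVec_mulVec, ← mulVec_mulVec, dotProduct_mulVec, vecMul_transpose]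
  linarith [hx (Fin.snoc (Fin.tail π) j)]
end
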